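/- Let β > 0 and ε ∈ (0,1). There is a constant C, depending only on β and ε, such that for all integers n ≥ 1 and j ≥ 1, E_n^β[ ( ∑_{μ=1}^n cos(jθ_μ)/j^{4+ε} )² ] ≤ C and E_n^β[ ( ∑_{μ=1}^n sin(jθ_μ)/j^{4+ε} )² ] ≤ C. (This is Lemma 4.1 of the paper in the case of the unit circle.) -/

import Mathlib

/-! Write `z_μ = e^{iθ_μ}` and `p_j = ∑_μ z_μ^j`. The two sums in the theorem are the real and
imaginary parts of `p_j / j^{4+ε}`, so it suffices that `E|p_j|² = O(j²)` uniformly in `n`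
(`cbeN_cbeP_le`).

For `n ≤ 4(1+β)j/β` the trivial bound `|p_j| ≤ n` is enough. For larger `n` the tool is the loop
equation (`loop_equation`), that is, integration by parts for the vector fields `z_μ^a G`. As the
density is not smooth where two angles meet, it is proved for the density with each factor
`|z - w|^β` replaced by `(|z - w|² + δ)^{β/2}`, and then `δ → 0`; symmetrising in `μ, ν` turns the
singular factors `cot((θ_μ - θ_ν)/2)` into polynomials, so that the limit exists.

Let `L` be the generator of the Dirichlet form `E⟨∇f, ∇g⟩`. The loop equation shows that on the
span of the products `p_λ` with `|λ| = j` one has `L = (βn/2) j + M`, where the splitting and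
joining operator `M` has norm at most `R = (1+β)j²` for the `ℓ¹` norm of the coefficients,
independently of `n` (`exists_generator_step`). As `M` is symmetric in `L²`, the sequence
`m ↦ ‖M^m p_j‖²` is log-convex, and it is bounded by a multiple of `R^{2m}`; hence
`‖M p_j‖ ≤ R ‖p_j‖` and `|⟨M p_j, p_j⟩| ≤ R ‖p_j‖²` (`le_of_logConvex_of_geometric`,
`abs_correction_le`). This avoids any comparison of the `ℓ¹` and `L²` norms.
Since `E|∇p_j|² = j² n`, it follows that
`(βn/2) j E|p_j|² ≤ j² n + (1+β) j² E|p_j|²`, whence `E|p_j|² ≤ 4j/β` for `n > 4(1+β)j/β`. -/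

open MeasureTheory Finset Filter Topology

/-- The cube `[0, 2π]^n`. -/
noncomputable def cbeCube (n : ℕ) : Set (Fin n → ℝ) :=
  Set.univ.pi fun _ => Set.Icc 0 (2 * Real.pi)

/-- The (unnormalized) density `∏_{μ<ν} |e^{iθ_μ} - e^{iθ_ν}|^β` of the circular β-ensemble. -/
noncomputable def cbeWeight (β : ℝ) (n : ℕ) (θ : Fin n → ℝ) : ℝ :=
  ∏ p ∈ Finset.univ.filter (fun p : Fin n × Fin n => p.1 < p.2),
    ‖Complex.exp (Complex.I * (θ p.1 : ℂ)) - Complex.exp (Complex.I * (θ p.2 : ℂ))‖ ^ β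

/-- Expectation `E_n^β[f]` with respect to the circular β-ensemble. -/
noncomputable def cbeExp (β : ℝ) (n : ℕ) (f : (Fin n → ℝ) → ℝ) : ℝ :=
  (∫ θ in cbeCube n, f θ * cbeWeight β n θ) / ∫ θ in cbeCube n, cbeWeight β n θ

/-! ### Smooth periodic functions and the divergence theorem -/

/-- The partial derivative of `f` in the angle `θ_μ`. -/
noncomputable def cbeD {n : ℕ} (μ : Fin n) (f : (Fin n → ℝ) → ℂ) (θ : Fin n → ℝ) : ℂ :=
  fderiv ℝ f θ (Pi.single μ 1)

/-- `C¹` functions of the angles that are `2π`-periodic in each of them. -/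
structure CbeSmooth {n : ℕ} (f : (Fin n → ℝ) → ℂ) : Prop where
  contDiff : ContDiff ℝ 1 f
  periodic : ∀ μ θ, f (θ + Pi.single μ (2 * Real.pi)) = f θ

namespace CbeSmooth

variable {n : ℕ} {f g : (Fin n → ℝ) → ℂ}

lemma continuous (hf : CbeSmooth f) : Continuous f := hf.contDiff.continuous

lemma differentiableAt (hf : CbeSmooth f) (θ : Fin n → ℝ) : DifferentiableAt ℝ f θ :=
  (hf.contDiff.differentiable (by norm_num)) θ

lemma continuous_cbeD (hf : CbeSmooth f) (μ : Fin n) : Continuous (cbeD μ f) :=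
  (hf.contDiff.continuous_fderiv (by norm_num)).clm_apply continuous_const

lemma add (hf : CbeSmooth f) (hg : CbeSmooth g) : CbeSmooth (fun θ => f θ + g θ) :=
  ⟨hf.contDiff.add hg.contDiff, fun μ θ => by rw [hf.periodic, hg.periodic]⟩

lemma mul (hf : CbeSmooth f) (hg : CbeSmooth g) : CbeSmooth (fun θ => f θ * g θ) :=
  ⟨hf.contDiff.mul hg.contDiff, fun μ θ => by rw [hf.periodic, hg.periodic]⟩

lemma const (c : ℂ) : CbeSmooth (fun _ : Fin n → ℝ => c) :=
  ⟨contDiff_const, fun _ _ => rfl⟩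

lemma conj (hf : CbeSmooth f) : CbeSmooth (fun θ => (starRingEnd ℂ) (f θ)) :=
  ⟨Complex.conjCLE.contDiff.comp hf.contDiff, fun μ θ => by rw [hf.periodic]⟩

lemma cbeD_add (hf : CbeSmooth f) (hg : CbeSmooth g) (μ : Fin n) (θ : Fin n → ℝ) :
    cbeD μ (fun θ => f θ + g θ) θ = cbeD μ f θ + cbeD μ g θ := by
  unfold cbeD
  rw [((hf.differentiableAt θ).hasFDerivAt.fun_add (hg.differentiableAt θ).hasFDerivAt).fderiv]
  rfl

lemma cbeD_mul (hf : CbeSmooth f) (hg : CbeSmooth g) (μ : Fin n) (θ : Fin n → ℝ) :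
    cbeD μ (fun θ => f θ * g θ) θ = cbeD μ f θ * g θ + f θ * cbeD μ g θ := by
  unfold cbeD
  rw [((hf.differentiableAt θ).hasFDerivAt.fun_mul (hg.differentiableAt θ).hasFDerivAt).fderiv]
  simp
  ring

lemma cbeD_conj (hf : CbeSmooth f) (μ : Fin n) (θ : Fin n → ℝ) :
    cbeD μ (fun θ => (starRingEnd ℂ) (f θ)) θ = (starRingEnd ℂ) (cbeD μ f θ) := by
  unfold cbeD
  have h := (Complex.conjCLE.hasFDerivAt (x := f θ)).comp θ (hf.differentiableAt θ).hasFDerivAt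
  have h' : HasFDerivAt (fun θ => (starRingEnd ℂ) (f θ))
    ((Complex.conjCLE : ℂ →L[ℝ] ℂ).comp (fderiv ℝ f θ)) θ := h
  rw [h'.fderiv]
  simp

end CbeSmooth

lemma cbeD_const_mul {n : ℕ} {f : (Fin n → ℝ) → ℂ} (hf : CbeSmooth f) (c : ℂ) (μ : Fin n)
    (θ : Fin n → ℝ) : cbeD μ (fun θ => c * f θ) θ = c * cbeD μ f θ := by
  rw [(CbeSmooth.const c).cbeD_mul hf]
  simp [cbeD]

lemma cbeCube_eq_Icc (n : ℕ) :
    cbeCube n = Set.Icc (fun _ => 0) (fun _ => 2 * Real.pi) := by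
  rw [cbeCube, Set.pi_univ_Icc]

lemma isCompact_cbeCube (n : ℕ) : IsCompact (cbeCube n) :=
  isCompact_univ_pi fun _ => isCompact_Icc

/-- The divergence of a periodic vector field integrates to zero over the torus. -/
lemma integral_divergence_eq_zero {n : ℕ} (F : Fin n → (Fin n → ℝ) → ℂ)
    (hF : ∀ μ, CbeSmooth (F μ)) : ∫ θ in cbeCube n, ∑ μ, cbeD μ (F μ) θ = 0 := by
  cases n with
  | zero => simp
  | succ m =>
    have key := integral_divergence_of_hasFDerivAt_off_countable (n := m) (E := ℂ)
      (a := fun _ => 0) (b := fun _ => 2 * Real.pi)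
      (fun _ => by positivity) (fun θ μ => F μ θ)
      (fun θ => ContinuousLinearMap.pi fun μ => fderiv ℝ (F μ) θ) ∅ Set.countable_empty
      (continuous_pi fun μ => (hF μ).continuous).continuousOn
      (fun θ _ => hasFDerivAt_pi.2 fun μ => ((hF μ).differentiableAt θ).hasFDerivAt)
      (by
        rw [← cbeCube_eq_Icc]
        exact (continuous_finsetSum _ fun μ _ =>
          (hF μ).continuous_cbeD μ).continuousOn.integrableOn_compact (isCompact_cbeCube _))
    rw [cbeCube_eq_Icc]
    refine Eq.trans key ?_
    refine Finset.sum_eq_zero fun i _ => ?_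
    rw [sub_eq_zero]
    congr 1
    ext x
    rw [← (hF i).periodic i (i.insertNth 0 x)]
    congr 1
    ext k
    refine Fin.succAboveCases i ?_ (fun l => ?_) k <;> simp

/-! ### The regularised weight -/

/-- `|e^{ix} - e^{iy}|²` as a function of `x - y`. -/
noncomputable def cbeQ (x : ℝ) : ℝ := 2 - 2 * Real.cos x

lemma cbeQ_nonneg (x : ℝ) : 0 ≤ cbeQ x := by
  unfold cbeQ; linarith [Real.cos_le_one x]

/-- The weight with each `|z - w|^β` replaced by `(|z - w|² + δ)^{β/2}`. -/
noncomputable def cbeW (β : ℝ) (n : ℕ) (δ : ℝ) (θ : Fin n → ℝ) : ℝ :=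
  ∏ p ∈ Finset.univ.filter (fun p : Fin n × Fin n => p.1 < p.2),
    (cbeQ (θ p.1 - θ p.2) + δ) ^ (β / 2)

lemma cbe_norm_sub_sq (x y : ℝ) :
    ‖Complex.exp (Complex.I * (x : ℂ)) - Complex.exp (Complex.I * (y : ℂ))‖ ^ 2
      = cbeQ (x - y) := by
  rw [← Complex.normSq_eq_norm_sq, Complex.normSq_apply]
  simp [mul_comm Complex.I, Complex.exp_ofReal_mul_I_re, Complex.exp_ofReal_mul_I_im, cbeQ,
    Real.cos_sub]
  nlinarith [Real.sin_sq_add_cos_sq x, Real.sin_sq_add_cos_sq y]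

lemma cbeWeight_eq (β : ℝ) (n : ℕ) (θ : Fin n → ℝ) : cbeWeight β n θ = cbeW β n 0 θ := by
  unfold cbeWeight cbeW
  refine Finset.prod_congr rfl fun p _ => ?_
  rw [add_zero, ← cbe_norm_sub_sq, ← Real.rpow_natCast, ← Real.rpow_mul (norm_nonneg _)]
  congr 1
  push_cast
  ring

lemma cbeWeight_nonneg (β : ℝ) (n : ℕ) (θ : Fin n → ℝ) : 0 ≤ cbeWeight β n θ :=
  Finset.prod_nonneg fun _ _ => Real.rpow_nonneg (norm_nonneg _) _

lemma continuous_cbeQ : Continuous cbeQ := by unfold cbeQ; fun_prop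

lemma continuous_cbeW {β : ℝ} (hβ : 0 < β) (n : ℕ) (δ : ℝ) : Continuous (cbeW β n δ) := by
  unfold cbeW
  refine continuous_finsetProd _ fun p _ => ?_
  refine Continuous.rpow_const ?_ fun _ => Or.inr (by positivity)
  exact (continuous_cbeQ.comp (by fun_prop)).add continuous_const

lemma continuous_cbeWeight {β : ℝ} (hβ : 0 < β) (n : ℕ) : Continuous (cbeWeight β n) := by
  have : cbeWeight β n = cbeW β n 0 := funext (cbeWeight_eq β n)
  rw [this]
  exact continuous_cbeW hβ n 0

lemma tendsto_cbeW {β : ℝ} (hβ : 0 < β) (n : ℕ) (θ : Fin n → ℝ) :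
    Tendsto (fun δ => cbeW β n δ θ) (𝓝[>] 0) (𝓝 (cbeWeight β n θ)) := by
  rw [cbeWeight_eq]
  refine Tendsto.mono_left ?_ nhdsWithin_le_nhds
  refine Continuous.tendsto (f := fun δ => cbeW β n δ θ) ?_ 0
  unfold cbeW
  refine continuous_finsetProd _ fun p _ => ?_
  refine Continuous.rpow_const (by fun_prop) fun _ => Or.inr (by positivity)

lemma cbeW_nonneg (β : ℝ) (n : ℕ) {δ : ℝ} (hδ : 0 ≤ δ) (θ : Fin n → ℝ) : 0 ≤ cbeW β n δ θ :=
  Finset.prod_nonneg fun _ _ => Real.rpow_nonneg (add_nonneg (cbeQ_nonneg _) hδ) _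

lemma cbeW_le_one {β : ℝ} (hβ : 0 < β) (n : ℕ) {δ : ℝ} (hδ : 0 ≤ δ) (hδ1 : δ ≤ 1)
    (θ : Fin n → ℝ) : cbeW β n δ θ ≤ cbeW β n 1 θ := by
  unfold cbeW
  refine Finset.prod_le_prod (fun _ _ => Real.rpow_nonneg (add_nonneg (cbeQ_nonneg _) hδ) _)
    fun p _ => ?_
  exact Real.rpow_le_rpow (add_nonneg (cbeQ_nonneg _) hδ) (by linarith) (by positivity)

lemma cbeW_eq_exp (β : ℝ) (n : ℕ) {δ : ℝ} (hδ : 0 < δ) (θ : Fin n → ℝ) :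
    cbeW β n δ θ = Real.exp (∑ p ∈ Finset.univ.filter (fun p : Fin n × Fin n => p.1 < p.2),
      (β / 2) * Real.log (cbeQ (θ p.1 - θ p.2) + δ)) := by
  rw [Real.exp_sum]
  refine Finset.prod_congr rfl fun p _ => ?_
  rw [Real.rpow_def_of_pos (add_pos_of_nonneg_of_pos (cbeQ_nonneg _) hδ), mul_comm]

lemma contDiff_cbeW (β : ℝ) (n : ℕ) {δ : ℝ} (hδ : 0 < δ) : ContDiff ℝ 1 (cbeW β n δ) := by
  rw [funext (cbeW_eq_exp β n hδ)]
  refine Real.contDiff_exp.comp (ContDiff.sum fun p _ => contDiff_const.mul ?_)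
  refine ContDiff.log ?_ fun θ => (add_pos_of_nonneg_of_pos (cbeQ_nonneg _) hδ).ne'
  unfold cbeQ
  fun_prop

lemma fderiv_cbeW (β : ℝ) (n : ℕ) {δ : ℝ} (hδ : 0 < δ) (θ v : Fin n → ℝ) :
    fderiv ℝ (cbeW β n δ) θ v = cbeW β n δ θ *
      ∑ p ∈ Finset.univ.filter (fun p : Fin n × Fin n => p.1 < p.2),
        (β / 2) * (2 * Real.sin (θ p.1 - θ p.2) / (cbeQ (θ p.1 - θ p.2) + δ)
          * (v p.1 - v p.2)) := by
  have hpos : ∀ x, 0 < cbeQ x + δ := fun x => add_pos_of_nonneg_of_pos (cbeQ_nonneg _) hδ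
  have h1 : ∀ p : Fin n × Fin n, HasFDerivAt (fun θ : Fin n → ℝ =>
      (β / 2) * Real.log (cbeQ (θ p.1 - θ p.2) + δ))
      ((β / 2) • ((cbeQ (θ p.1 - θ p.2) + δ)⁻¹ • ((2 * Real.sin (θ p.1 - θ p.2)) •
        ((ContinuousLinearMap.proj p.1 : (Fin n → ℝ) →L[ℝ] ℝ)
          - ContinuousLinearMap.proj p.2)))) θ := by
    intro p
    have hlin : HasFDerivAt (fun θ : Fin n → ℝ => θ p.1 - θ p.2)
        ((ContinuousLinearMap.proj p.1 : (Fin n → ℝ) →L[ℝ] ℝ)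
          - ContinuousLinearMap.proj p.2) θ :=
      (hasFDerivAt_apply p.1 θ).sub (hasFDerivAt_apply p.2 θ)
    have hq : HasDerivAt (fun x => cbeQ x + δ) (2 * Real.sin (θ p.1 - θ p.2))
        (θ p.1 - θ p.2) := by
      have := (((Real.hasDerivAt_cos (θ p.1 - θ p.2)).const_mul 2).const_sub 2).add_const δ
      unfold cbeQ
      rw [mul_neg, neg_neg] at this
      exact this
    have hc : HasFDerivAt (fun θ : Fin n → ℝ => cbeQ (θ p.1 - θ p.2) + δ)
        ((2 * Real.sin (θ p.1 - θ p.2)) • ((ContinuousLinearMap.proj p.1 :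
          (Fin n → ℝ) →L[ℝ] ℝ) - ContinuousLinearMap.proj p.2)) θ :=
      HasDerivAt.comp_hasFDerivAt (h₂ := fun x => cbeQ x + δ) θ hq hlin
    exact (hc.log (hpos _).ne').const_mul (β / 2)
  have h2 := (HasFDerivAt.fun_sum (u := Finset.univ.filter
    (fun p : Fin n × Fin n => p.1 < p.2)) fun p _ => h1 p).exp
  rw [funext (cbeW_eq_exp β n hδ), h2.fderiv]
  simp only [smul_apply, _root_.sum_apply, smul_eq_mul,
    sub_apply, ContinuousLinearMap.proj_apply]
  congr 1
  refine Finset.sum_congr rfl fun p _ => ?_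
  ring

lemma cbeSmooth_cbeW (β : ℝ) (n : ℕ) {δ : ℝ} (hδ : 0 < δ) :
    CbeSmooth (fun θ => (cbeW β n δ θ : ℂ)) := by
  refine ⟨Complex.ofRealCLM.contDiff.comp (contDiff_cbeW β n hδ), fun μ θ => ?_⟩
  have hper : ∀ ν : Fin n, ∃ k : ℤ,
      (θ + Pi.single μ (2 * Real.pi) : Fin n → ℝ) ν = θ ν + k * (2 * Real.pi) := by
    intro ν
    by_cases h : ν = μ
    · subst h; exact ⟨1, by simp⟩
    · exact ⟨0, by simp [h]⟩
  congr 1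
  unfold cbeW cbeQ
  refine Finset.prod_congr rfl fun p _ => ?_
  obtain ⟨k, hk⟩ := hper p.1
  obtain ⟨l, hl⟩ := hper p.2
  have : θ p.1 + k * (2 * Real.pi) - (θ p.2 + l * (2 * Real.pi))
      = θ p.1 - θ p.2 + ((k - l : ℤ) : ℝ) * (2 * Real.pi) := by push_cast; ring
  rw [hk, hl, this, Real.cos_add_int_mul_two_pi]

lemma cbeD_cbeW (β : ℝ) (n : ℕ) {δ : ℝ} (hδ : 0 < δ) (μ : Fin n) (θ : Fin n → ℝ) :
    cbeD μ (fun θ => (cbeW β n δ θ : ℂ)) θ = (fderiv ℝ (cbeW β n δ) θ (Pi.single μ 1) : ℝ) := by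
  unfold cbeD
  have h := (Complex.ofRealCLM.hasFDerivAt (x := cbeW β n δ θ)).comp θ
    ((contDiff_cbeW β n hδ).differentiable (by norm_num) θ).hasFDerivAt
  have h' : HasFDerivAt (fun θ => (cbeW β n δ θ : ℂ))
    (Complex.ofRealCLM.comp (fderiv ℝ (cbeW β n δ) θ)) θ := h
  rw [h'.fderiv]
  simp

lemma Continuous.integrableOn_of_cube {E : Type*} [NormedAddCommGroup E] {n : ℕ}
    {f : (Fin n → ℝ) → E} (hf : Continuous f) : IntegrableOn f (cbeCube n) :=
  hf.continuousOn.integrableOn_compact (isCompact_cbeCube n)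

lemma tendsto_ofReal_cbe {l : Filter ℝ} {f : ℝ → ℝ} {x : ℝ} (h : Tendsto f l (𝓝 x)) :
    Tendsto (fun δ => (f δ : ℂ)) l (𝓝 (x : ℂ)) :=
  (Complex.continuous_ofReal.tendsto x).comp h

/-! ### The loop equation -/

/-- The point `z_μ = e^{iθ_μ}` of the unit circle. -/
noncomputable def cbeZ {n : ℕ} (μ : Fin n) (θ : Fin n → ℝ) : ℂ :=
  Complex.exp (Complex.I * (θ μ : ℂ))

/-- The power sum `p_a = ∑_μ z_μ^a`. -/
noncomputable def cbeP {n : ℕ} (a : ℕ) (θ : Fin n → ℝ) : ℂ := ∑ μ, cbeZ μ θ ^ a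

/-- The polynomial `(z + w) (z^a - w^a) / (z - w)` for `a ≥ 1`, written out. -/
noncomputable def cbeK (a : ℕ) (z w : ℂ) : ℂ :=
  z ^ a + w ^ a + 2 * ∑ b ∈ Finset.Ico 1 a, z ^ b * w ^ (a - b)

lemma sub_mul_cbeK {a : ℕ} (ha : 1 ≤ a) (z w : ℂ) :
    (z - w) * cbeK a z w = (z + w) * (z ^ a - w ^ a) := by
  unfold cbeK
  induction a, ha using Nat.le_induction with
  | base => simp; ring
  | succ a ha ih =>
    have : ∑ b ∈ Finset.Ico 1 (a + 1), z ^ b * w ^ (a + 1 - b)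
        = w * ∑ b ∈ Finset.Ico 1 a, z ^ b * w ^ (a - b) + z ^ a * w := by
      rw [Finset.sum_Ico_succ_top ha, Finset.mul_sum]
      congr 1
      · refine Finset.sum_congr rfl fun b hb => ?_
        have hb := Finset.mem_Ico.1 hb
        rw [show a + 1 - b = (a - b) + 1 by omega]
        ring
      · simp
    rw [this]
    linear_combination w * ih

lemma cbeK_comm {a : ℕ} (z w : ℂ) : cbeK a z w = cbeK a w z := by
  unfold cbeK
  rw [add_comm (z ^ a)]
  congr 2
  refine Finset.sum_nbij' (fun b => a - b) (fun b => a - b) ?_ ?_ ?_ ?_ ?_ <;>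
    simp only [Finset.mem_Ico] <;> intro b hb
  · omega
  · omega
  · omega
  · omega
  · rw [show a - (a - b) = b by omega, mul_comm]

lemma cbeK_self {a : ℕ} (ha : 1 ≤ a) (z : ℂ) : cbeK a z z = 2 * a * z ^ a := by
  unfold cbeK
  have : ∑ b ∈ Finset.Ico 1 a, z ^ b * z ^ (a - b) = ∑ b ∈ Finset.Ico 1 a, z ^ a := by
    refine Finset.sum_congr rfl fun b hb => ?_
    have hb := Finset.mem_Ico.1 hb
    rw [← pow_add]
    congr 1
    omega
  rw [this]
  simp
  push_cast [Nat.cast_sub ha]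
  ring

/-- After symmetrisation the singular factor `cot((x - y)/2)` is a polynomial in
`z = e^{ix}`, `w = e^{iy}`. -/
lemma pow_sub_pow_mul_sin {a : ℕ} (ha : 1 ≤ a) (x y : ℝ) :
    (2 * Real.sin (x - y) : ℝ) *
      (Complex.exp (Complex.I * x) ^ a - Complex.exp (Complex.I * y) ^ a)
      = cbeQ (x - y) * (Complex.I *
        cbeK a (Complex.exp (Complex.I * x)) (Complex.exp (Complex.I * y))) := by
  have hz : Complex.exp (Complex.I * x) ≠ 0 := Complex.exp_ne_zero _
  have hw : Complex.exp (Complex.I * y) ≠ 0 := Complex.exp_ne_zero _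
  have h1 : Complex.exp (((x - y : ℝ) : ℂ) * Complex.I)
      = Complex.exp (Complex.I * x) / Complex.exp (Complex.I * y) := by
    rw [← Complex.exp_sub]; congr 1; push_cast; ring
  have h2 : Complex.exp (-((x - y : ℝ) : ℂ) * Complex.I)
      = Complex.exp (Complex.I * y) / Complex.exp (Complex.I * x) := by
    rw [← Complex.exp_sub]; congr 1; push_cast; ring
  have hs : ((2 * Real.sin (x - y) : ℝ) : ℂ)
      = (Complex.exp (Complex.I * y) / Complex.exp (Complex.I * x)
        - Complex.exp (Complex.I * x) / Complex.exp (Complex.I * y)) * Complex.I := by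
    rw [Complex.ofReal_mul, Complex.ofReal_sin, Complex.sin, h1, h2]; push_cast; ring
  have hq : ((cbeQ (x - y) : ℝ) : ℂ)
      = 2 - (Complex.exp (Complex.I * x) / Complex.exp (Complex.I * y)
        + Complex.exp (Complex.I * y) / Complex.exp (Complex.I * x)) := by
    unfold cbeQ
    rw [Complex.ofReal_sub, Complex.ofReal_mul, Complex.ofReal_cos, Complex.cos, h1, h2]
    push_cast; ring
  rw [hs, hq]
  have hK := sub_mul_cbeK ha (Complex.exp (Complex.I * x)) (Complex.exp (Complex.I * y))
  generalize Complex.exp (Complex.I * x) = z at *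
  generalize Complex.exp (Complex.I * y) = w at *
  field_simp
  linear_combination (z - w) * hK

lemma cbeSmooth_cbeZ {n : ℕ} (μ : Fin n) : CbeSmooth (cbeZ μ) := by
  refine ⟨?_, fun ν θ => ?_⟩
  · unfold cbeZ
    refine Complex.contDiff_exp.comp (contDiff_const.mul ?_)
    exact Complex.ofRealCLM.contDiff.comp (by fun_prop)
  · unfold cbeZ
    by_cases h : μ = ν
    · subst h
      rw [Complex.exp_eq_exp_iff_exists_int]
      refine ⟨1, ?_⟩
      simp
      ring
    · simp [h]

lemma CbeSmooth.pow {n : ℕ} {f : (Fin n → ℝ) → ℂ} (hf : CbeSmooth f) (a : ℕ) :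
    CbeSmooth (fun θ => f θ ^ a) :=
  ⟨hf.contDiff.pow a, fun μ θ => by rw [hf.periodic]⟩

lemma CbeSmooth.sum {n : ℕ} {ι : Type*} {s : Finset ι} {f : ι → (Fin n → ℝ) → ℂ}
    (hf : ∀ i, CbeSmooth (f i)) : CbeSmooth (fun θ => ∑ i ∈ s, f i θ) :=
  ⟨ContDiff.sum fun i _ => (hf i).contDiff, fun μ θ => by simp only [(hf _).periodic]⟩

lemma cbeSmooth_cbeP {n : ℕ} (a : ℕ) : CbeSmooth (cbeP a : (Fin n → ℝ) → ℂ) :=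
  CbeSmooth.sum fun μ => (cbeSmooth_cbeZ μ).pow a

lemma hasFDerivAt_cbeZ_pow {n : ℕ} (μ : Fin n) (a : ℕ) (θ : Fin n → ℝ) :
    HasFDerivAt (fun θ => cbeZ μ θ ^ a) ((Complex.I * a * cbeZ μ θ ^ a) •
      (Complex.ofRealCLM.comp (ContinuousLinearMap.proj μ : (Fin n → ℝ) →L[ℝ] ℝ))) θ := by
  have h0 : HasFDerivAt (fun θ : Fin n → ℝ => (θ μ : ℂ))
      (Complex.ofRealCLM.comp (ContinuousLinearMap.proj μ : (Fin n → ℝ) →L[ℝ] ℝ)) θ :=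
    (Complex.ofRealCLM.hasFDerivAt).comp θ (hasFDerivAt_apply μ θ)
  have h1 := (h0.const_mul (Complex.I * a)).cexp
  have h2 : (fun θ : Fin n → ℝ => cbeZ μ θ ^ a)
      = fun θ => Complex.exp (Complex.I * a * (θ μ : ℂ)) := by
    funext θ
    rw [cbeZ, ← Complex.exp_nat_mul]
    congr 1; ring
  have h3 := congrFun h2 θ
  rw [h2, h3, mul_comm (Complex.I * (a : ℂ)), ← smul_smul]
  exact h1

lemma cbeD_cbeZ_pow {n : ℕ} (μ ν : Fin n) (a : ℕ) (θ : Fin n → ℝ) :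
    cbeD μ (fun θ => cbeZ ν θ ^ a) θ
      = if ν = μ then Complex.I * a * cbeZ μ θ ^ a else 0 := by
  unfold cbeD
  rw [(hasFDerivAt_cbeZ_pow ν a θ).fderiv]
  by_cases h : ν = μ
  · subst h; simp
  · simp [h]

lemma cbeD_cbeP {n : ℕ} (μ : Fin n) (a : ℕ) (θ : Fin n → ℝ) :
    cbeD μ (cbeP a) θ = Complex.I * a * cbeZ μ θ ^ a := by
  have h := HasFDerivAt.fun_sum (u := Finset.univ) fun ν _ => hasFDerivAt_cbeZ_pow ν a θ
  have h' : HasFDerivAt (cbeP a) _ θ := h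
  unfold cbeD
  rw [h'.fderiv]
  simp [Pi.single_apply, apply_ite Complex.ofReal]

lemma two_mul_sum_lt {n : ℕ} (k : Fin n → Fin n → ℂ) (hk : ∀ μ ν, k μ ν = k ν μ) :
    2 * ∑ p ∈ Finset.univ.filter (fun p : Fin n × Fin n => p.1 < p.2), k p.1 p.2
      = ∑ μ, ∑ ν, k μ ν - ∑ μ, k μ μ := by
  have hswap : ∑ p ∈ Finset.univ.filter (fun p : Fin n × Fin n => p.2 < p.1), k p.1 p.2
      = ∑ p ∈ Finset.univ.filter (fun p : Fin n × Fin n => p.1 < p.2), k p.1 p.2 := by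
    refine Finset.sum_nbij' Prod.swap Prod.swap ?_ ?_ ?_ ?_ ?_ <;>
      simp [hk]
  have hdiag : ∑ μ, k μ μ
      = ∑ p ∈ Finset.univ.filter (fun p : Fin n × Fin n => p.1 = p.2), k p.1 p.2 := by
    rw [Finset.sum_filter, Fintype.sum_prod_type]
    simp
  have hall : ∑ μ, ∑ ν, k μ ν = ∑ p : Fin n × Fin n, k p.1 p.2 := by
    rw [Fintype.sum_prod_type]
  rw [hall, hdiag, two_mul]
  nth_rewrite 2 [← hswap]
  rw [Finset.sum_filter, Finset.sum_filter, Finset.sum_filter, ← Finset.sum_add_distrib,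
    ← Finset.sum_sub_distrib]
  refine Finset.sum_congr rfl fun p _ => ?_
  rcases lt_trichotomy p.1 p.2 with h | h | h
  · simp [h, h.ne, h.not_gt]
  · simp [h]
  · simp [h, h.ne', h.not_gt]

lemma sum_lt_cbeK {n : ℕ} {a : ℕ} (ha : 1 ≤ a) (θ : Fin n → ℝ) :
    ∑ p ∈ Finset.univ.filter (fun p : Fin n × Fin n => p.1 < p.2),
      cbeK a (cbeZ p.1 θ) (cbeZ p.2 θ)
      = ((n : ℂ) - a) * cbeP a θ + ∑ b ∈ Finset.Ico 1 a, cbeP b θ * cbeP (a - b) θ := by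
  have h := two_mul_sum_lt (fun μ ν => cbeK a (cbeZ μ θ) (cbeZ ν θ)) fun μ ν => cbeK_comm _ _
  have hall : ∑ μ, ∑ ν, cbeK a (cbeZ μ θ) (cbeZ ν θ) = 2 * n * cbeP a θ
      + 2 * ∑ b ∈ Finset.Ico 1 a, cbeP b θ * cbeP (a - b) θ := by
    have h3 : ∑ μ, ∑ ν, ∑ b ∈ Finset.Ico 1 a, cbeZ μ θ ^ b * cbeZ ν θ ^ (a - b)
        = ∑ b ∈ Finset.Ico 1 a, cbeP b θ * cbeP (a - b) θ := by
      have : ∀ μ, ∑ ν, ∑ b ∈ Finset.Ico 1 a, cbeZ μ θ ^ b * cbeZ ν θ ^ (a - b)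
          = ∑ b ∈ Finset.Ico 1 a, cbeZ μ θ ^ b * cbeP (a - b) θ := fun μ => by
        rw [Finset.sum_comm]
        simp only [cbeP, Finset.mul_sum]
      simp only [this]
      rw [Finset.sum_comm]
      refine Finset.sum_congr rfl fun b _ => ?_
      rw [← Finset.sum_mul]
      rfl
    simp only [cbeK, Finset.sum_add_distrib, ← Finset.mul_sum, h3]
    simp [cbeP, Finset.mul_sum]
    simp only [← Finset.sum_add_distrib]
    refine Finset.sum_congr rfl fun μ _ => ?_
    ring
  have hd : ∑ μ, cbeK a (cbeZ μ θ) (cbeZ μ θ) = 2 * a * cbeP a θ := by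
    simp only [cbeK_self ha, ← Finset.mul_sum, cbeP]
  simp only [hall, hd] at h
  linear_combination h / 2

/-- The divergence of the field `z_μ^a G` against the regularised weight. -/
lemma sum_cbeD_regularised {β : ℝ} {n : ℕ} {a : ℕ} (ha : 1 ≤ a) {G : (Fin n → ℝ) → ℂ}
    (hG : CbeSmooth G) {δ : ℝ} (hδ : 0 < δ) (θ : Fin n → ℝ) :
    ∑ μ, cbeD μ (fun θ => (cbeZ μ θ ^ a * G θ) * (cbeW β n δ θ : ℂ)) θ
      = (∑ μ, cbeZ μ θ ^ a * cbeD μ G θ + Complex.I * a * cbeP a θ * G θ) * cbeW β n δ θ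
        + G θ * ∑ p ∈ Finset.univ.filter (fun p : Fin n × Fin n => p.1 < p.2),
            ((cbeW β n δ θ * (cbeQ (θ p.1 - θ p.2) / (cbeQ (θ p.1 - θ p.2) + δ)) : ℝ) : ℂ)
              * ((β / 2) * (Complex.I * cbeK a (cbeZ p.1 θ) (cbeZ p.2 θ))) := by
  have h1 : ∀ μ, cbeD μ (fun θ => (cbeZ μ θ ^ a * G θ) * (cbeW β n δ θ : ℂ)) θ
      = (cbeZ μ θ ^ a * cbeD μ G θ + Complex.I * a * cbeZ μ θ ^ a * G θ) * cbeW β n δ θ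
        + G θ * (cbeZ μ θ ^ a * (fderiv ℝ (cbeW β n δ) θ (Pi.single μ 1) : ℝ)) := by
    intro μ
    rw [(((cbeSmooth_cbeZ μ).pow a).mul hG).cbeD_mul (cbeSmooth_cbeW β n hδ),
      ((cbeSmooth_cbeZ μ).pow a).cbeD_mul hG, cbeD_cbeW β n hδ, cbeD_cbeZ_pow]
    simp
    ring
  simp only [h1, Finset.sum_add_distrib, ← Finset.sum_mul, ← Finset.mul_sum]
  congr 1
  · congr 1
    simp only [fderiv_cbeW β n hδ, Complex.ofReal_mul, Complex.ofReal_sum, Finset.mul_sum]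
    rw [Finset.sum_comm]
    refine Finset.sum_congr rfl fun p _ => ?_
    have h2 : ∀ c : Fin n → ℂ, ∀ A B : ℂ,
        ∑ μ, c μ * (A * (B * (((Pi.single μ (1 : ℝ) : Fin n → ℝ) p.1
          - (Pi.single μ (1 : ℝ) : Fin n → ℝ) p.2 : ℝ) : ℂ)))
          = A * (B * (c p.1 - c p.2)) := by
      intro c A B
      have : ∀ μ, c μ * (A * (B * (((Pi.single μ (1 : ℝ) : Fin n → ℝ) p.1
          - (Pi.single μ (1 : ℝ) : Fin n → ℝ) p.2 : ℝ) : ℂ)))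
          = A * (B * ((if p.1 = μ then c μ else 0) - (if p.2 = μ then c μ else 0))) := by
        intro μ
        simp only [Pi.single_apply]
        split_ifs <;> simp <;> ring
      simp only [this, ← Finset.mul_sum, Finset.sum_sub_distrib]
      simp
    have h3 := pow_sub_pow_mul_sin ha (θ p.1) (θ p.2)
    have hne : ((cbeQ (θ p.1 - θ p.2) + δ : ℝ) : ℂ) ≠ 0 :=
      Complex.ofReal_ne_zero.2 (add_pos_of_nonneg_of_pos (cbeQ_nonneg _) hδ).ne'
    calc _ = ∑ μ, cbeZ μ θ ^ a * ((cbeW β n δ θ * (β / 2 : ℝ) : ℂ) *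
          (((2 * Real.sin (θ p.1 - θ p.2) / (cbeQ (θ p.1 - θ p.2) + δ) : ℝ) : ℂ) *
            (((Pi.single μ (1 : ℝ) : Fin n → ℝ) p.1
              - (Pi.single μ (1 : ℝ) : Fin n → ℝ) p.2 : ℝ) : ℂ))) := by
          refine Finset.sum_congr rfl fun μ _ => ?_
          push_cast
          ring
      _ = _ := by
          rw [h2 (fun μ => cbeZ μ θ ^ a)]
          unfold cbeZ
          rw [Complex.ofReal_div, Complex.ofReal_div, div_mul_eq_mul_div, h3]
          push_cast
          ring

lemma tendsto_cbeW_mul {β : ℝ} (hβ : 0 < β) (n : ℕ) (θ : Fin n → ℝ) {p : Fin n × Fin n}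
    (hp : p.1 < p.2) :
    Tendsto (fun δ => cbeW β n δ θ * (cbeQ (θ p.1 - θ p.2) / (cbeQ (θ p.1 - θ p.2) + δ)))
      (𝓝[>] 0) (𝓝 (cbeWeight β n θ)) := by
  rcases (cbeQ_nonneg (θ p.1 - θ p.2)).eq_or_lt with h | h
  · -- At a collision both sides vanish, since the weight does.
    have hw : cbeWeight β n θ = 0 := by
      rw [cbeWeight_eq]
      refine Finset.prod_eq_zero (i := p) (by simpa using hp) ?_
      rw [← h, add_zero, Real.zero_rpow (by positivity)]
    rw [hw, ← h]
    simp
  · have h1 : Tendsto (fun δ : ℝ => cbeQ (θ p.1 - θ p.2) / (cbeQ (θ p.1 - θ p.2) + δ))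
        (𝓝[>] 0) (𝓝 1) := by
      refine Tendsto.mono_left ?_ nhdsWithin_le_nhds
      have : Tendsto (fun δ : ℝ => cbeQ (θ p.1 - θ p.2) / (cbeQ (θ p.1 - θ p.2) + δ)) (𝓝 0)
          (𝓝 (cbeQ (θ p.1 - θ p.2) / (cbeQ (θ p.1 - θ p.2) + 0))) :=
        tendsto_const_nhds.div (tendsto_const_nhds.add tendsto_id) (by simpa using h.ne')
      simpa [h.ne'] using this
    simpa using (tendsto_cbeW hβ n θ).mul h1

lemma continuous_cbeZ {n : ℕ} (μ : Fin n) : Continuous (cbeZ μ) := (cbeSmooth_cbeZ μ).continuous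

lemma continuous_cbeP {n : ℕ} (a : ℕ) : Continuous (cbeP a : (Fin n → ℝ) → ℂ) :=
  (cbeSmooth_cbeP a).continuous

/-- The loop equation: integration by parts for the field `z_μ^a G`. -/
lemma loop_equation {β : ℝ} (hβ : 0 < β) {n : ℕ} {a : ℕ} (ha : 1 ≤ a) {G : (Fin n → ℝ) → ℂ}
    (hG : CbeSmooth G) :
    ∫ θ in cbeCube n, (∑ μ, cbeZ μ θ ^ a * cbeD μ G θ + Complex.I * (a * cbeP a θ
      + (β / 2) * (((n : ℂ) - a) * cbeP a θ
        + ∑ b ∈ Finset.Ico 1 a, cbeP b θ * cbeP (a - b) θ)) * G θ) * cbeWeight β n θ = 0 := by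
  have hZ := @continuous_cbeZ n
  have hP := @continuous_cbeP n
  have hGc := hG.continuous
  have hDc := hG.continuous_cbeD
  have hA : Continuous (fun θ => ∑ μ, cbeZ μ θ ^ a * cbeD μ G θ
      + Complex.I * a * cbeP a θ * G θ) := by fun_prop
  have hK : ∀ p : Fin n × Fin n, Continuous (fun θ =>
      (β / 2 : ℂ) * (Complex.I * cbeK a (cbeZ p.1 θ) (cbeZ p.2 θ))) := by
    intro p
    unfold cbeK
    fun_prop
  have hW1 := continuous_cbeW hβ n 1
  have hlim := tendsto_integral_filter_of_dominated_convergence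
    (μ := volume.restrict (cbeCube n)) (l := 𝓝[>] (0 : ℝ))
    (F := fun δ θ => ∑ μ, cbeD μ (fun θ => (cbeZ μ θ ^ a * G θ) * (cbeW β n δ θ : ℂ)) θ)
    (f := fun θ => (∑ μ, cbeZ μ θ ^ a * cbeD μ G θ + Complex.I * (a * cbeP a θ
      + (β / 2) * (((n : ℂ) - a) * cbeP a θ
        + ∑ b ∈ Finset.Ico 1 a, cbeP b θ * cbeP (a - b) θ)) * G θ) * cbeWeight β n θ)
    (fun θ => ‖∑ μ, cbeZ μ θ ^ a * cbeD μ G θ + Complex.I * a * cbeP a θ * G θ‖ * cbeW β n 1 θ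
      + ‖G θ‖ * ∑ p ∈ Finset.univ.filter (fun p : Fin n × Fin n => p.1 < p.2),
        cbeW β n 1 θ * ‖(β / 2 : ℂ) * (Complex.I * cbeK a (cbeZ p.1 θ) (cbeZ p.2 θ))‖)
    ?_ ?_ ?_ ?_
  · refine tendsto_nhds_unique hlim (tendsto_const_nhds.congr' ?_)
    filter_upwards [self_mem_nhdsWithin] with δ hδ
    exact (integral_divergence_eq_zero _ fun μ =>
      (((cbeSmooth_cbeZ μ).pow a).mul hG).mul (cbeSmooth_cbeW β n hδ)).symm
  · filter_upwards [self_mem_nhdsWithin] with δ hδ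
    refine Continuous.aestronglyMeasurable ?_
    exact continuous_finsetSum _ fun μ _ => ((((cbeSmooth_cbeZ μ).pow a).mul hG).mul
      (cbeSmooth_cbeW β n hδ)).continuous_cbeD μ
  · have h1 : ∀ᶠ δ : ℝ in 𝓝[>] 0, δ < 1 :=
      nhdsWithin_le_nhds (eventually_lt_nhds (by norm_num))
    filter_upwards [self_mem_nhdsWithin, h1] with δ hδ hδ1
    refine Eventually.of_forall fun θ => ?_
    have hδ : 0 < δ := hδ
    rw [sum_cbeD_regularised ha hG hδ]
    have hw0 := cbeW_nonneg β n hδ.le θ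
    have hw1 := cbeW_le_one hβ n hδ.le hδ1.le θ
    refine (norm_add_le _ _).trans (add_le_add ?_ ?_)
    · rw [norm_mul, Complex.norm_real, Real.norm_of_nonneg hw0]
      gcongr
    · rw [norm_mul]
      refine mul_le_mul_of_nonneg_left ((norm_sum_le _ _).trans ?_) (norm_nonneg _)
      refine Finset.sum_le_sum fun p _ => ?_
      have hq := cbeQ_nonneg (θ p.1 - θ p.2)
      rw [norm_mul, Complex.norm_real, Real.norm_of_nonneg (by positivity)]
      refine mul_le_mul_of_nonneg_right ?_ (norm_nonneg _)
      refine (mul_le_of_le_one_right hw0 ?_).trans hw1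
      exact div_le_one_of_le₀ (by linarith) (by positivity)
  · refine Continuous.integrableOn_of_cube ?_
    fun_prop
  · refine Eventually.of_forall fun θ => ?_
    have heq : (∑ μ, cbeZ μ θ ^ a * cbeD μ G θ + Complex.I * (a * cbeP a θ
      + (β / 2) * (((n : ℂ) - a) * cbeP a θ
        + ∑ b ∈ Finset.Ico 1 a, cbeP b θ * cbeP (a - b) θ)) * G θ) * cbeWeight β n θ
        = (∑ μ, cbeZ μ θ ^ a * cbeD μ G θ + Complex.I * a * cbeP a θ * G θ)
          * (cbeWeight β n θ : ℂ)
        + G θ * ∑ p ∈ Finset.univ.filter (fun p : Fin n × Fin n => p.1 < p.2),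
          (cbeWeight β n θ : ℂ)
            * ((β / 2) * (Complex.I * cbeK a (cbeZ p.1 θ) (cbeZ p.2 θ))) := by
      rw [← Finset.mul_sum, ← Finset.mul_sum, ← Finset.mul_sum, sum_lt_cbeK ha]
      ring
    rw [heq]
    refine Tendsto.congr' (f₁ := fun δ => _) ?_ (Tendsto.add
      (tendsto_const_nhds.mul (tendsto_ofReal_cbe (tendsto_cbeW hβ n θ)))
      (tendsto_const_nhds.mul (tendsto_finsetSum _ fun p hp =>
        (tendsto_ofReal_cbe (tendsto_cbeW_mul hβ n θ
          (Finset.mem_filter.1 hp).2)).mul tendsto_const_nhds)))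
    filter_upwards [self_mem_nhdsWithin] with δ hδ
    exact (sum_cbeD_regularised ha hG hδ θ).symm

/-! ### Unnormalised expectations -/

/-- The unnormalised expectation `∫ f w` over the cube. -/
noncomputable def cbeI (β : ℝ) {n : ℕ} (f : (Fin n → ℝ) → ℂ) : ℂ :=
  ∫ θ in cbeCube n, f θ * cbeWeight β n θ

section expectation

variable {β : ℝ} {n : ℕ}

lemma cbeI_integrable (hβ : 0 < β) {f : (Fin n → ℝ) → ℂ} (hf : Continuous f) :
    IntegrableOn (fun θ => f θ * (cbeWeight β n θ : ℂ)) (cbeCube n) :=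
  (hf.mul (Complex.continuous_ofReal.comp (continuous_cbeWeight hβ n))).integrableOn_of_cube

lemma cbeI_add (hβ : 0 < β) {f g : (Fin n → ℝ) → ℂ} (hf : Continuous f) (hg : Continuous g) :
    cbeI β (fun θ => f θ + g θ) = cbeI β f + cbeI β g := by
  unfold cbeI
  rw [← integral_add (cbeI_integrable hβ hf) (cbeI_integrable hβ hg)]
  simp only [add_mul]

lemma cbeI_const_mul (c : ℂ) (f : (Fin n → ℝ) → ℂ) :
    cbeI β (fun θ => c * f θ) = c * cbeI β f := by
  unfold cbeI
  rw [← integral_const_mul]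
  simp only [mul_assoc]

lemma cbeI_conj (f : (Fin n → ℝ) → ℂ) :
    cbeI β (fun θ => (starRingEnd ℂ) (f θ)) = (starRingEnd ℂ) (cbeI β f) := by
  unfold cbeI
  rw [← integral_conj]
  simp

/-- The Dirichlet form `∫ ⟨∇f, ∇g⟩ w`. -/
noncomputable def cbeDir (β : ℝ) {n : ℕ} (f g : (Fin n → ℝ) → ℂ) : ℂ :=
  cbeI β fun θ => ∑ μ, cbeD μ f θ * (starRingEnd ℂ) (cbeD μ g θ)

lemma cbeDir_conj (f g : (Fin n → ℝ) → ℂ) :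
    cbeDir β f g = (starRingEnd ℂ) (cbeDir β g f) := by
  unfold cbeDir
  rw [← cbeI_conj]
  simp [mul_comm]

end expectation

/-! ### Products of power sums -/

/-- The product `p_λ = ∏_{a ∈ λ} p_a`. -/
noncomputable def cbePl {n : ℕ} : List ℕ → (Fin n → ℝ) → ℂ
  | [] => fun _ => 1
  | a :: l => fun θ => cbeP a θ * cbePl l θ

/-- `z_μ ∂p_λ/∂z_μ`, that is `-i` times the derivative of `p_λ` in the angle `θ_μ`. -/
noncomputable def cbeDl {n : ℕ} (μ : Fin n) : List ℕ → (Fin n → ℝ) → ℂ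
  | [] => fun _ => 0
  | a :: l => fun θ => a * cbeZ μ θ ^ a * cbePl l θ + cbeP a θ * cbeDl μ l θ

section products

variable {n : ℕ}

lemma cbePl_append (l k : List ℕ) (θ : Fin n → ℝ) :
    cbePl (l ++ k) θ = cbePl l θ * cbePl k θ := by
  induction l with
  | nil => simp [cbePl]
  | cons a l ih => simp [cbePl, ih, mul_assoc]

lemma cbeSmooth_cbePl (l : List ℕ) : CbeSmooth (cbePl l : (Fin n → ℝ) → ℂ) := by
  induction l with
  | nil => exact CbeSmooth.const 1
  | cons a l ih => exact (cbeSmooth_cbeP a).mul ih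

lemma cbeD_cbePl (l : List ℕ) (μ : Fin n) (θ : Fin n → ℝ) :
    cbeD μ (cbePl l) θ = Complex.I * cbeDl μ l θ := by
  induction l with
  | nil => simp [cbePl, cbeDl, cbeD]
  | cons a l ih =>
    have : cbeD μ (cbePl (a :: l)) θ = cbeD μ (fun θ => cbeP a θ * cbePl l θ) θ := rfl
    rw [this, (cbeSmooth_cbeP a).cbeD_mul (cbeSmooth_cbePl l), cbeD_cbeP, ih, cbeDl]
    ring

lemma continuous_cbeDl (l : List ℕ) (μ : Fin n) : Continuous (cbeDl μ l) := by
  induction l with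
  | nil => exact continuous_const
  | cons a l ih =>
    have h1 := continuous_cbeZ μ
    have h2 := continuous_cbeP (n := n) a
    have h3 := (cbeSmooth_cbePl (n := n) l).continuous
    unfold cbeDl
    fun_prop

lemma norm_cbeZ (μ : Fin n) (θ : Fin n → ℝ) : ‖cbeZ μ θ‖ = 1 := by
  rw [cbeZ, mul_comm, Complex.norm_exp_ofReal_mul_I]

lemma norm_cbeP_le (a : ℕ) (θ : Fin n → ℝ) : ‖cbeP a θ‖ ≤ n := by
  refine (norm_sum_le _ _).trans ?_
  simp [norm_cbeZ]

lemma norm_cbePl_le (hn : 1 ≤ n) (l : List ℕ) (hl : ∀ a ∈ l, 1 ≤ a) (θ : Fin n → ℝ) :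
    ‖cbePl l θ‖ ≤ (n : ℝ) ^ l.sum := by
  have hn' : (1 : ℝ) ≤ n := by exact_mod_cast hn
  induction l with
  | nil => simp [cbePl]
  | cons a l ih =>
    have ha : 1 ≤ a := hl a (by simp)
    rw [cbePl, norm_mul, List.sum_cons, pow_add]
    refine mul_le_mul ((norm_cbeP_le a θ).trans ?_) (ih fun b hb => hl b (by simp [hb]))
      (norm_nonneg _) (by positivity)
    exact le_self_pow₀ hn' (by omega)

/-- `CbeHull j B f`: the function `f` is a real combination of products `p_λ` with `λ` a
partition of `j` (a list of positive parts), with absolute sum of coefficients at most `B`. -/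
inductive CbeHull {n : ℕ} (j : ℕ) : ℝ → ((Fin n → ℝ) → ℂ) → Prop
  | single (l : List ℕ) (hl : ∀ a ∈ l, 1 ≤ a) (hs : l.sum = j) : CbeHull j 1 (cbePl l)
  | zero : CbeHull j 0 (fun _ => 0)
  | add {A B : ℝ} {f g : (Fin n → ℝ) → ℂ} (hf : CbeHull j A f) (hg : CbeHull j B g) :
      CbeHull j (A + B) (fun θ => f θ + g θ)
  | smul (c : ℝ) {B : ℝ} {f : (Fin n → ℝ) → ℂ} (hf : CbeHull j B f) :
      CbeHull j (|c| * B) (fun θ => (c : ℂ) * f θ)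
  | mono {A B : ℝ} {f : (Fin n → ℝ) → ℂ} (hf : CbeHull j A f) (h : A ≤ B) : CbeHull j B f

namespace CbeHull

variable {j : ℕ} {B : ℝ} {f : (Fin n → ℝ) → ℂ}

lemma smooth (h : CbeHull j B f) : CbeSmooth f := by
  induction h with
  | single l hl hs => exact cbeSmooth_cbePl l
  | zero => exact CbeSmooth.const 0
  | add _ _ h1 h2 => exact h1.add h2
  | smul c _ h1 => exact (CbeSmooth.const _).mul h1
  | mono _ _ h1 => exact h1

lemma norm_le (hn : 1 ≤ n) (h : CbeHull j B f) (θ : Fin n → ℝ) : ‖f θ‖ ≤ B * (n : ℝ) ^ j := by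
  induction h with
  | single l hl hs => simpa [hs] using norm_cbePl_le hn l hl θ
  | zero => simp
  | add _ _ h1 h2 => exact (norm_add_le _ _).trans (by linarith)
  | smul c _ h1 =>
    rw [norm_mul, Complex.norm_real, Real.norm_eq_abs, mul_assoc]
    gcongr
  | mono _ h h1 => exact h1.trans (by gcongr)

lemma congr {g : (Fin n → ℝ) → ℂ} (h : CbeHull j B f) (hfg : ∀ θ, f θ = g θ) :
    CbeHull j B g := by
  rwa [← funext hfg]

lemma mul_cbeP {b : ℕ} (hb : 1 ≤ b) (h : CbeHull j B f) :
    CbeHull (b + j) B (fun θ => cbeP b θ * f θ) := by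
  induction h with
  | single l hl hs =>
    refine single (b :: l) (fun a ha => ?_) (by simp [hs])
    rcases List.mem_cons.1 ha with rfl | ha
    · exact hb
    · exact hl a ha
  | zero => exact zero.congr fun θ => by simp
  | add _ _ h1 h2 => exact (h1.add h2).congr fun θ => by ring
  | smul c _ h1 => exact (h1.smul c).congr fun θ => by ring
  | mono _ h h1 => exact h1.mono h

lemma sum {s : Finset ℕ} {F : ℕ → (Fin n → ℝ) → ℂ} (h : ∀ b ∈ s, CbeHull j B (F b)) :
    CbeHull j (s.card * B) (fun θ => ∑ b ∈ s, F b θ) := by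
  induction s using Finset.induction_on with
  | empty => exact (zero.congr fun θ => by simp).mono (by simp)
  | insert b s hb ih =>
    have h1 := (h b (by simp)).add (ih fun c hc => h c (by simp [hc]))
    refine (h1.congr fun θ => by rw [Finset.sum_insert hb]).mono (le_of_eq ?_)
    rw [Finset.card_insert_of_notMem hb]
    push_cast
    ring

end CbeHull

/-- The joining terms `∑_μ z_μ^a (z_μ ∂_{z_μ}) p_λ = ∑_{b ∈ λ} b p_{a+b} p_{λ∖b}`. -/
lemma cbeHull_join {a : ℕ} (ha : 1 ≤ a) (l : List ℕ) (hl : ∀ b ∈ l, 1 ≤ b) :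
    CbeHull (a + l.sum) l.sum
      (fun θ : Fin n → ℝ => ∑ μ, cbeZ μ θ ^ a * cbeDl μ l θ) := by
  induction l with
  | nil => exact (CbeHull.zero.congr fun θ => by simp [cbeDl]).mono (by simp)
  | cons b l ih =>
    have hl' : ∀ c ∈ l, 1 ≤ c := fun c hc => hl c (by simp [hc])
    have h1 : CbeHull (n := n) (a + (b :: l).sum) 1 (cbePl ((a + b) :: l)) := by
      refine CbeHull.single _ (fun c hc => ?_) (by simp [add_assoc])
      rcases List.mem_cons.1 hc with rfl | hc
      · omega
      · exact hl' c hc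
    have h2 := (ih hl').mul_cbeP (hl b (by simp))
    rw [show b + (a + l.sum) = a + (b :: l).sum by simp; omega] at h2
    refine (((h1.smul (b : ℝ)).add h2).congr fun θ => ?_).mono (by simp)
    simp only [cbePl, cbeDl, cbeP, mul_add, Finset.sum_add_distrib, Finset.sum_mul,
      Finset.mul_sum, pow_add, Complex.ofReal_natCast]
    congr 1
    · refine Finset.sum_congr rfl fun μ _ => ?_
      ring
    · refine Finset.sum_congr rfl fun μ _ => Finset.sum_congr rfl fun ν _ => ?_
      ring

/-- The loop equation with `G = p_κ ḡ`, in weak form: the field `z_μ^a p_κ` paired with `∇g`. -/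
lemma field_pairing {β : ℝ} (hβ : 0 < β) {a : ℕ} (ha : 1 ≤ a) (k : List ℕ)
    {g : (Fin n → ℝ) → ℂ} (hg : CbeSmooth g) :
    cbeI β (fun θ => ∑ μ, cbeZ μ θ ^ a * cbePl k θ * (starRingEnd ℂ) (cbeD μ g θ))
      = -Complex.I * cbeI β (fun θ => (∑ μ, cbeZ μ θ ^ a * cbeDl μ k θ + (a * cbeP a θ
      + (β / 2) * (((n : ℂ) - a) * cbeP a θ
        + ∑ b ∈ Finset.Ico 1 a, cbeP b θ * cbeP (a - b) θ)) * cbePl k θ)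
          * (starRingEnd ℂ) (g θ)) := by
  have hk := cbeSmooth_cbePl (n := n) k
  have hkc := hk.continuous
  have hZ := @continuous_cbeZ n
  have hP := @continuous_cbeP n
  have hD := continuous_cbeDl (n := n) k
  have hgc : Continuous (fun θ => (starRingEnd ℂ) (g θ)) := hg.conj.continuous
  have hgD : ∀ μ, Continuous (fun θ => (starRingEnd ℂ) (cbeD μ g θ)) := fun μ =>
    Complex.continuous_conj.comp (hg.continuous_cbeD μ)
  have h := loop_equation hβ ha (hk.mul hg.conj)
  have h' : cbeI β (fun θ =>
      ∑ μ, cbeZ μ θ ^ a * cbePl k θ * (starRingEnd ℂ) (cbeD μ g θ)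
      + Complex.I * ((∑ μ, cbeZ μ θ ^ a * cbeDl μ k θ + (a * cbeP a θ
      + (β / 2) * (((n : ℂ) - a) * cbeP a θ
        + ∑ b ∈ Finset.Ico 1 a, cbeP b θ * cbeP (a - b) θ)) * cbePl k θ)
          * (starRingEnd ℂ) (g θ))) = 0 := by
    rw [← h]
    unfold cbeI
    congr 1
    funext θ
    congr 1
    have h1 : ∑ μ, cbeZ μ θ ^ a * cbeD μ (fun θ => cbePl k θ * (starRingEnd ℂ) (g θ)) θ
        = Complex.I * (∑ μ, cbeZ μ θ ^ a * cbeDl μ k θ) * (starRingEnd ℂ) (g θ)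
          + ∑ μ, cbeZ μ θ ^ a * cbePl k θ * (starRingEnd ℂ) (cbeD μ g θ) := by
      rw [Finset.mul_sum, Finset.sum_mul, ← Finset.sum_add_distrib]
      refine Finset.sum_congr rfl fun μ _ => ?_
      rw [hk.cbeD_mul hg.conj, hg.cbeD_conj, cbeD_cbePl]
      ring
    rw [h1]
    ring
  rw [cbeI_add hβ (by fun_prop) (by fun_prop), cbeI_const_mul] at h'
  linear_combination h'

lemma cbeHull_field {β : ℝ} (hβ : 0 < β) {a : ℕ} (ha : 1 ≤ a) (k : List ℕ)
    (hk : ∀ b ∈ k, 1 ≤ b) :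
    CbeHull (n := n) (a + k.sum) ((1 + β) * (a + k.sum)) (fun θ =>
      ∑ μ, cbeZ μ θ ^ a * cbeDl μ k θ + (((1 - β / 2) * a : ℝ) : ℂ) * (cbeP a θ * cbePl k θ)
      + ((β / 2 : ℝ) : ℂ) * ∑ b ∈ Finset.Ico 1 a, cbeP b θ * (cbeP (a - b) θ * cbePl k θ)) := by
  have hk1 : CbeHull (n := n) k.sum 1 (cbePl k) := CbeHull.single k hk rfl
  have h1 := cbeHull_join (n := n) ha k hk
  have h2 := (hk1.mul_cbeP ha).smul ((1 - β / 2) * a)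
  have h3 : CbeHull (n := n) (a + k.sum) ((Finset.Ico 1 a).card * 1) (fun θ =>
      ∑ b ∈ Finset.Ico 1 a, cbeP b θ * (cbeP (a - b) θ * cbePl k θ)) := by
    refine CbeHull.sum fun b hb => ?_
    have hb := Finset.mem_Ico.1 hb
    have := (hk1.mul_cbeP (b := a - b) (by omega)).mul_cbeP hb.1
    rwa [show b + (a - b + k.sum) = a + k.sum by omega] at this
  refine ((h1.add h2).add (h3.smul (β / 2))).mono ?_
  have ha' : (0 : ℝ) ≤ a := by positivity
  have hk' : (0 : ℝ) ≤ k.sum := by positivity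
  have hcard : ((Finset.Ico 1 a).card : ℝ) ≤ a := by
    rw [Nat.card_Ico]; exact_mod_cast Nat.sub_le _ _
  have habs : |(1 - β / 2) * a| ≤ (1 + β / 2) * a := by
    rw [abs_mul, abs_of_nonneg ha']
    gcongr
    rw [abs_le]
    constructor <;> linarith
  rw [abs_of_pos (by positivity : 0 < β / 2)]
  nlinarith [mul_le_mul_of_nonneg_left hcard (by positivity : 0 ≤ β / 2),
    mul_nonneg hβ.le hk']

/-- Splitting and joining: the vector field `(z_μ ∂_{z_μ} p_λ) p_κ` pairs with `∇g` like the
multiple `(βn/2)|λ|` of `p_λ p_κ`, up to a combination of power sum products whose coefficients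
are bounded independently of `n`. -/
lemma exists_correction {β : ℝ} (hβ : 0 < β) (l : List ℕ) (hl : ∀ a ∈ l, 1 ≤ a) :
    ∀ k : List ℕ, (∀ a ∈ k, 1 ≤ a) → ∃ X : (Fin n → ℝ) → ℂ,
      CbeHull (l.sum + k.sum) ((1 + β) * l.sum * (l.sum + k.sum)) X ∧
      ∀ g : (Fin n → ℝ) → ℂ, CbeSmooth g →
        cbeI β (fun θ => ∑ μ, cbeDl μ l θ * cbePl k θ * (starRingEnd ℂ) (cbeD μ g θ))
          = -Complex.I * cbeI β (fun θ => ((β / 2 * n * l.sum : ℝ) * (cbePl l θ * cbePl k θ)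
            + X θ) * (starRingEnd ℂ) (g θ)) := by
  induction l with
  | nil =>
    intro k _
    refine ⟨fun _ => 0, CbeHull.zero.mono (by simp), fun g _ => ?_⟩
    simp [cbeDl, cbeI]
  | cons a l ih =>
    intro k hk
    have ha : 1 ≤ a := hl a (by simp)
    have hl' : ∀ c ∈ l, 1 ≤ c := fun c hc => hl c (by simp [hc])
    have hlk : ∀ c ∈ l ++ k, 1 ≤ c := fun c hc => by
      rcases List.mem_append.1 hc with hc | hc
      · exact hl' c hc
      · exact hk c hc
    have hak : ∀ c ∈ a :: k, 1 ≤ c := fun c hc => by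
      rcases List.mem_cons.1 hc with rfl | hc
      · exact ha
      · exact hk c hc
    obtain ⟨X, hX, hXg⟩ := ih hl' (a :: k) hak
    have hF := (cbeHull_field (n := n) hβ ha (l ++ k) hlk).smul (a : ℝ)
    rw [show a + (l ++ k).sum = (a :: l).sum + k.sum by simp; omega] at hF
    rw [show l.sum + (a :: k).sum = (a :: l).sum + k.sum by simp; omega] at hX
    refine ⟨_, (hF.add hX).mono (le_of_eq ?_), fun g hg => ?_⟩
    · rw [abs_of_nonneg (by positivity)]
      simp only [List.sum_append, List.sum_cons]
      push_cast
      ring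
    · have hZ := @continuous_cbeZ n
      have hP := @continuous_cbeP n
      have hPl := fun l => (cbeSmooth_cbePl (n := n) l).continuous
      have hD := fun l => continuous_cbeDl (n := n) l
      have hXc := hX.smooth.continuous
      have hgc : Continuous (fun θ => (starRingEnd ℂ) (g θ)) := hg.conj.continuous
      have hgD : ∀ μ, Continuous (fun θ => (starRingEnd ℂ) (cbeD μ g θ)) := fun μ =>
        Complex.continuous_conj.comp (hg.continuous_cbeD μ)
      have e1 : (fun θ => ∑ μ, cbeDl μ (a :: l) θ * cbePl k θ * (starRingEnd ℂ) (cbeD μ g θ))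
          = fun θ => (a : ℂ) * (∑ μ, cbeZ μ θ ^ a * cbePl (l ++ k) θ
              * (starRingEnd ℂ) (cbeD μ g θ))
            + ∑ μ, cbeDl μ l θ * cbePl (a :: k) θ * (starRingEnd ℂ) (cbeD μ g θ) := by
        funext θ
        rw [Finset.mul_sum, ← Finset.sum_add_distrib]
        refine Finset.sum_congr rfl fun μ _ => ?_
        rw [cbePl_append, cbeDl, cbePl]
        ring
      rw [e1, cbeI_add hβ (by fun_prop) (by fun_prop), cbeI_const_mul,
        field_pairing hβ ha _ hg, hXg g hg, mul_left_comm, ← mul_add, ← cbeI_const_mul,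
        ← cbeI_add hβ (by fun_prop) (by fun_prop)]
      congr 2
      funext θ
      have e2 : ∑ b ∈ Finset.Ico 1 a, cbeP b θ * (cbeP (a - b) θ * cbePl (l ++ k) θ)
          = (∑ b ∈ Finset.Ico 1 a, cbeP b θ * cbeP (a - b) θ) * cbePl (l ++ k) θ := by
        rw [Finset.sum_mul]
        refine Finset.sum_congr rfl fun b _ => ?_
        ring
      simp only [e2]
      simp only [cbePl, cbePl_append, List.sum_cons]
      push_cast
      ring

/-- On the span of the products `p_λ` with `|λ| = j`, the generator of the Dirichlet form is
`(βn/2) j` plus an operator of norm at most `(1 + β) j²` for the coefficient `ℓ¹` norm. -/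
lemma exists_generator_step {β : ℝ} (hβ : 0 < β) {j : ℕ} {B : ℝ} {f : (Fin n → ℝ) → ℂ}
    (hf : CbeHull j B f) : ∃ X : (Fin n → ℝ) → ℂ, CbeHull j ((1 + β) * j ^ 2 * B) X ∧
      ∀ g : (Fin n → ℝ) → ℂ, CbeSmooth g → cbeDir β f g
        = (β / 2 * n * j : ℝ) * cbeI β (fun θ => f θ * (starRingEnd ℂ) (g θ))
          + cbeI β (fun θ => X θ * (starRingEnd ℂ) (g θ)) := by
  have hconjc : ∀ g : (Fin n → ℝ) → ℂ, CbeSmooth g →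
      Continuous (fun θ => (starRingEnd ℂ) (g θ)) := fun g hg => hg.conj.continuous
  have hconjD : ∀ g : (Fin n → ℝ) → ℂ, CbeSmooth g → ∀ μ,
      Continuous (fun θ => (starRingEnd ℂ) (cbeD μ g θ)) := fun g hg μ =>
    Complex.continuous_conj.comp (hg.continuous_cbeD μ)
  induction hf with
  | single l hl hs =>
    obtain ⟨X, hX, hXg⟩ := exists_correction (n := n) hβ l hl [] (by simp)
    simp only [List.sum_nil, add_zero, hs, Nat.cast_zero] at hX
    refine ⟨X, hX.mono (le_of_eq (by ring)), fun g hg => ?_⟩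
    have hgc := hconjc g hg
    have hPl := (cbeSmooth_cbePl (n := n) l).continuous
    have hXc := hX.smooth.continuous
    have h := hXg g hg
    simp only [cbePl, mul_one, hs] at h
    have e1 : cbeDir β (cbePl l) g = Complex.I * cbeI β (fun θ =>
        ∑ μ, cbeDl μ l θ * (starRingEnd ℂ) (cbeD μ g θ)) := by
      rw [← cbeI_const_mul]
      unfold cbeDir
      simp only [cbeD_cbePl, Finset.mul_sum, mul_assoc]
    rw [e1, h, ← mul_assoc, mul_neg, Complex.I_mul_I, neg_neg, one_mul, ← cbeI_const_mul,
      ← cbeI_add hβ (by fun_prop) (by fun_prop)]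
    simp only [add_mul, mul_assoc]
  | zero =>
    refine ⟨_, CbeHull.zero.mono (by simp), fun g hg => ?_⟩
    simp [cbeDir, cbeI, cbeD]
  | @add A B f₁ f₂ h₁ h₂ ih₁ ih₂ =>
    obtain ⟨X₁, hX₁, hg₁⟩ := ih₁
    obtain ⟨X₂, hX₂, hg₂⟩ := ih₂
    refine ⟨_, (hX₁.add hX₂).mono (le_of_eq (by ring)), fun g hg => ?_⟩
    have hgc := hconjc g hg
    have hgD := hconjD g hg
    have c1 := h₁.smooth.continuous
    have c2 := h₂.smooth.continuous
    have d1 := h₁.smooth.continuous_cbeD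
    have d2 := h₂.smooth.continuous_cbeD
    have c3 := hX₁.smooth.continuous
    have c4 := hX₂.smooth.continuous
    have e1 : cbeDir β (fun θ => f₁ θ + f₂ θ) g = cbeDir β f₁ g + cbeDir β f₂ g := by
      unfold cbeDir
      rw [← cbeI_add hβ (by fun_prop) (by fun_prop)]
      simp only [h₁.smooth.cbeD_add h₂.smooth, add_mul, Finset.sum_add_distrib]
    simp only [add_mul]
    rw [e1, hg₁ g hg, hg₂ g hg, cbeI_add hβ (by fun_prop) (by fun_prop),
      cbeI_add hβ (by fun_prop) (by fun_prop)]
    ring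
  | @smul c B f₁ h₁ ih₁ =>
    obtain ⟨X₁, hX₁, hg₁⟩ := ih₁
    refine ⟨_, (hX₁.smul c).mono (le_of_eq (by ring)), fun g hg => ?_⟩
    have e1 : cbeDir β (fun θ => (c : ℂ) * f₁ θ) g = c * cbeDir β f₁ g := by
      unfold cbeDir
      rw [← cbeI_const_mul]
      simp only [cbeD_const_mul h₁.smooth, Finset.mul_sum, mul_assoc]
    simp only [mul_assoc]
    rw [e1, hg₁ g hg, cbeI_const_mul, cbeI_const_mul]
    push_cast
    ring
  | mono h₁ hle ih₁ =>
    obtain ⟨X₁, hX₁, hg₁⟩ := ih₁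
    exact ⟨X₁, hX₁.mono (by gcongr), hg₁⟩

end products

/-! ### The second moment of a power sum -/

/-- The squared norm `∫ |f|² w`. -/
noncomputable def cbeN (β : ℝ) {n : ℕ} (f : (Fin n → ℝ) → ℂ) : ℝ :=
  ∫ θ in cbeCube n, ‖f θ‖ ^ 2 * cbeWeight β n θ

section moment

variable {β : ℝ} {n : ℕ}

lemma cbeI_mul_conj (f : (Fin n → ℝ) → ℂ) :
    cbeI β (fun θ => f θ * (starRingEnd ℂ) (f θ)) = (cbeN β f : ℂ) := by
  unfold cbeI cbeN
  rw [← integral_complex_ofReal]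
  simp [Complex.mul_conj, Complex.normSq_eq_norm_sq]

lemma cbeN_nonneg (f : (Fin n → ℝ) → ℂ) : 0 ≤ cbeN β f :=
  integral_nonneg fun θ => mul_nonneg (by positivity) (cbeWeight_nonneg β n θ)

lemma cbe_cauchy_schwarz (hβ : 0 < β) {f g : (Fin n → ℝ) → ℂ} (hf : Continuous f)
    (hg : Continuous g) :
    ‖cbeI β (fun θ => f θ * (starRingEnd ℂ) (g θ))‖ ^ 2 ≤ cbeN β f * cbeN β g := by
  have hw := continuous_cbeWeight hβ n
  have hw0 := cbeWeight_nonneg β n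
  set M : ℝ := ∫ θ in cbeCube n, ‖f θ‖ * ‖g θ‖ * cbeWeight β n θ with hM
  have h1 : ‖cbeI β (fun θ => f θ * (starRingEnd ℂ) (g θ))‖ ≤ M := by
    refine (norm_integral_le_integral_norm _).trans (le_of_eq ?_)
    rw [hM]
    congr 1
    funext θ
    simp [abs_of_nonneg (hw0 θ)]
  have h2 : ∀ t : ℝ, 0 ≤ cbeN β f * (t * t) + (2 * M) * t + cbeN β g := by
    intro t
    have : cbeN β f * (t * t) + (2 * M) * t + cbeN β g
        = ∫ θ in cbeCube n, (t * ‖f θ‖ + ‖g θ‖) ^ 2 * cbeWeight β n θ := by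
      have i1 : IntegrableOn (fun θ => ‖f θ‖ ^ 2 * cbeWeight β n θ * (t * t)) (cbeCube n) :=
        Continuous.integrableOn_of_cube (by fun_prop)
      have i2 : IntegrableOn (fun θ => ‖f θ‖ * ‖g θ‖ * cbeWeight β n θ * (2 * t))
        (cbeCube n) := Continuous.integrableOn_of_cube (by fun_prop)
      have i3 : IntegrableOn (fun θ => ‖g θ‖ ^ 2 * cbeWeight β n θ) (cbeCube n) :=
        Continuous.integrableOn_of_cube (by fun_prop)
      have i12 : IntegrableOn (fun θ => ‖f θ‖ ^ 2 * cbeWeight β n θ * (t * t)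
          + ‖f θ‖ * ‖g θ‖ * cbeWeight β n θ * (2 * t)) (cbeCube n) :=
        Continuous.integrableOn_of_cube (by fun_prop)
      have e : (fun θ => (t * ‖f θ‖ + ‖g θ‖) ^ 2 * cbeWeight β n θ)
          = fun θ => ‖f θ‖ ^ 2 * cbeWeight β n θ * (t * t)
            + ‖f θ‖ * ‖g θ‖ * cbeWeight β n θ * (2 * t) + ‖g θ‖ ^ 2 * cbeWeight β n θ := by
        funext θ; ring
      rw [e, integral_add i12 i3, integral_add i1 i2, integral_mul_const,
        integral_mul_const, ← hM]
      unfold cbeN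
      ring
    rw [this]
    exact integral_nonneg fun θ => mul_nonneg (sq_nonneg _) (hw0 θ)
  have h3 := discrim_le_zero h2
  unfold discrim at h3
  have h4 : ‖cbeI β (fun θ => f θ * (starRingEnd ℂ) (g θ))‖ ^ 2 ≤ M ^ 2 := by gcongr
  nlinarith

/-- A log-convex sequence growing at most like `Q^m` satisfies `a₁ ≤ Q a₀`. -/
lemma le_of_logConvex_of_geometric {a : ℕ → ℝ} {C Q : ℝ} (hQ : 0 < Q) (ha : ∀ m, 0 ≤ a m)
    (hconv : ∀ m, a (m + 1) ^ 2 ≤ a m * a (m + 2)) (hgrow : ∀ m, a m ≤ C * Q ^ m) :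
    a 1 ≤ Q * a 0 := by
  by_contra! hlt
  have h0 : 0 < a 0 := by
    rcases (ha 0).eq_or_lt with h | h
    · have := hconv 0
      rw [← h] at this hlt
      simp only [zero_add, mul_zero, zero_mul] at this hlt
      nlinarith
    · exact h
  set r := a 1 / a 0 with hr
  have hrQ : Q < r := by rw [hr, lt_div_iff₀ h0]; exact hlt
  have hr0 : 0 < r := hQ.trans hrQ
  have hstep : ∀ m, 0 < a m ∧ r * a m ≤ a (m + 1) := by
    intro m
    induction m with
    | zero => exact ⟨h0, by rw [hr]; field_simp; rfl⟩
    | succ m ih =>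
      obtain ⟨hm, hm'⟩ := ih
      have hm1 : 0 < a (m + 1) := lt_of_lt_of_le (by positivity) hm'
      refine ⟨hm1, ?_⟩
      have h2 := hconv m
      have h3 : a m * (r * a (m + 1)) ≤ a m * a (m + 2) := by nlinarith
      exact le_of_mul_le_mul_left h3 hm
  have hpow : ∀ m, r ^ m * a 0 ≤ a m := by
    intro m
    induction m with
    | zero => simp
    | succ m ih =>
      refine le_trans ?_ (hstep m).2
      rw [pow_succ, mul_comm (r ^ m) r, mul_assoc]
      gcongr
  obtain ⟨m, hm⟩ := pow_unbounded_of_one_lt (C / a 0) ((one_lt_div hQ).2 hrQ)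
  have h5 := (hpow m).trans (hgrow m)
  rw [div_pow, div_lt_div_iff₀ h0 (by positivity)] at hm
  linarith

/-- Iterating the correction term of the generator, starting from `p_j`. -/
lemma exists_iterates (hβ : 0 < β) {j : ℕ} (hj : 1 ≤ j) :
    ∃ x : ℕ → (Fin n → ℝ) → ℂ, x 0 = cbePl [j] ∧
      (∀ m, CbeHull j (((1 + β) * j ^ 2) ^ m) (x m)) ∧
      ∀ m, ∀ g : (Fin n → ℝ) → ℂ, CbeSmooth g → cbeDir β (x m) g
        = (β / 2 * n * j : ℝ) * cbeI β (fun θ => x m θ * (starRingEnd ℂ) (g θ))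
          + cbeI β (fun θ => x (m + 1) θ * (starRingEnd ℂ) (g θ)) := by
  choose! X hX hXg using fun (B : ℝ) (f : (Fin n → ℝ) → ℂ) (hf : CbeHull j B f) =>
    exists_generator_step (n := n) hβ hf
  let x : ℕ → (Fin n → ℝ) → ℂ := fun m =>
    Nat.rec (cbePl [j]) (fun k f => X (((1 + β) * j ^ 2) ^ k) f) m
  have hx : ∀ m, CbeHull j (((1 + β) * j ^ 2) ^ m) (x m) := by
    intro m
    induction m with
    | zero => exact (CbeHull.single [j] (by simpa using hj) (by simp)).mono (by simp)
    | succ m ih => exact (hX _ _ ih).mono (le_of_eq (by ring))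
  exact ⟨x, rfl, hx, fun m g hg => hXg _ _ (hx m) g hg⟩

/-- The correction term `x m ↦ x (m + 1)` of the generator is symmetric, so its quadratic form
at `x 0` is bounded by its norm for the coefficient `ℓ¹` norm. -/
lemma abs_correction_le (hβ : 0 < β) (hn : 1 ≤ n) {j : ℕ} (hj : 1 ≤ j)
    {x : ℕ → (Fin n → ℝ) → ℂ}
    (hx : ∀ m, CbeHull j (((1 + β) * j ^ 2) ^ m) (x m))
    (hstep : ∀ m, ∀ g : (Fin n → ℝ) → ℂ, CbeSmooth g → cbeDir β (x m) g
        = (β / 2 * n * j : ℝ) * cbeI β (fun θ => x m θ * (starRingEnd ℂ) (g θ))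
          + cbeI β (fun θ => x (m + 1) θ * (starRingEnd ℂ) (g θ))) :
    ‖cbeI β (fun θ => x 1 θ * (starRingEnd ℂ) (x 0 θ))‖
      ≤ (1 + β) * j ^ 2 * cbeN β (x 0) := by
  set R : ℝ := (1 + β) * j ^ 2 with hR
  have hj' : (0 : ℝ) < j := by exact_mod_cast hj
  have hR0 : 0 < R := by positivity
  have hswap : ∀ f g : (Fin n → ℝ) → ℂ, cbeI β (fun θ => f θ * (starRingEnd ℂ) (g θ))
      = (starRingEnd ℂ) (cbeI β (fun θ => g θ * (starRingEnd ℂ) (f θ))) := by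
    intro f g
    rw [← cbeI_conj]
    simp [mul_comm]
  have hsymm : ∀ m k, cbeI β (fun θ => x (m + 1) θ * (starRingEnd ℂ) (x k θ))
      = cbeI β (fun θ => x m θ * (starRingEnd ℂ) (x (k + 1) θ)) := by
    intro m k
    have h1 := hstep m (x k) (hx k).smooth
    have h2 := hstep k (x m) (hx m).smooth
    rw [cbeDir_conj, h2, map_add, map_mul, Complex.conj_ofReal, ← hswap, ← hswap] at h1
    exact (add_left_cancel h1).symm
  have hconv : ∀ m, cbeN β (x (m + 1)) ^ 2 ≤ cbeN β (x m) * cbeN β (x (m + 2)) := by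
    intro m
    have h := cbe_cauchy_schwarz hβ (hx m).smooth.continuous (hx (m + 2)).smooth.continuous
    rw [← hsymm m (m + 1), cbeI_mul_conj, Complex.norm_real, Real.norm_eq_abs, sq_abs] at h
    exact h
  have hgrow : ∀ m, cbeN β (x m)
      ≤ (((n : ℝ) ^ j) ^ 2 * ∫ θ in cbeCube n, cbeWeight β n θ) * (R ^ 2) ^ m := by
    intro m
    have hw := continuous_cbeWeight hβ n
    have hxc := (hx m).smooth.continuous
    have : (((n : ℝ) ^ j) ^ 2 * ∫ θ in cbeCube n, cbeWeight β n θ) * (R ^ 2) ^ m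
        = ∫ θ in cbeCube n, (R ^ m * (n : ℝ) ^ j) ^ 2 * cbeWeight β n θ := by
      rw [integral_const_mul]
      ring_nf
    rw [this]
    refine integral_mono (Continuous.integrableOn_of_cube (by fun_prop))
      (Continuous.integrableOn_of_cube (by fun_prop)) fun θ => ?_
    have h1 := (hx m).norm_le hn θ
    have h2 := cbeWeight_nonneg β n θ
    simp only
    gcongr
  have hkey := le_of_logConvex_of_geometric (a := fun m => cbeN β (x m))
    (by positivity : 0 < R ^ 2) (fun m => cbeN_nonneg _) hconv hgrow
  have hcs := cbe_cauchy_schwarz hβ (hx 1).smooth.continuous (hx 0).smooth.continuous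
  have h0 := cbeN_nonneg (β := β) (x 0)
  refine abs_le_of_sq_le_sq' ?_ (by positivity) |>.2
  calc _ ≤ cbeN β (x 1) * cbeN β (x 0) := hcs
    _ ≤ R ^ 2 * cbeN β (x 0) * cbeN β (x 0) := by gcongr
    _ = _ := by ring

lemma cbeDir_self (j : ℕ) :
    cbeDir β (cbePl [j]) (cbePl [j] : (Fin n → ℝ) → ℂ)
      = ((j ^ 2 * n * ∫ θ in cbeCube n, cbeWeight β n θ : ℝ) : ℂ) := by
  have h : ∀ (μ : Fin n) θ, cbeD μ (cbePl [j]) θ * (starRingEnd ℂ) (cbeD μ (cbePl [j]) θ)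
      = ((j ^ 2 : ℝ) : ℂ) := by
    intro μ θ
    rw [cbeD_cbePl, Complex.mul_conj, Complex.normSq_eq_norm_sq]
    simp [cbeDl, cbePl, norm_cbeZ]
  unfold cbeDir cbeI
  simp only [h]
  rw [integral_const_mul, integral_complex_ofReal]
  simp only [Finset.sum_const, Finset.card_univ, Fintype.card_fin, nsmul_eq_mul]
  push_cast
  ring

/-- The second moment of `p_j` is `O(j²)`, uniformly in `n`. -/
lemma cbeN_cbeP_le (hβ : 0 < β) (hn : 1 ≤ n) {j : ℕ} (hj : 1 ≤ j) :
    cbeN β (cbeP j : (Fin n → ℝ) → ℂ)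
      ≤ ((4 * (1 + β) / β) ^ 2 + 4 / β) * j ^ 2 * ∫ θ in cbeCube n, cbeWeight β n θ := by
  have hw := continuous_cbeWeight hβ n
  have hZ : 0 ≤ ∫ θ in cbeCube n, cbeWeight β n θ :=
    integral_nonneg fun θ => cbeWeight_nonneg β n θ
  have hj' : (1 : ℝ) ≤ j := by exact_mod_cast hj
  have hn' : (1 : ℝ) ≤ n := by exact_mod_cast hn
  set Z := ∫ θ in cbeCube n, cbeWeight β n θ with hZdef
  rcases le_or_gt (n : ℝ) (4 * (1 + β) / β * j) with h | h
  · -- For `n = O(j)` the trivial bound `|p_j| ≤ n` suffices.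
    have h1 : cbeN β (cbeP j : (Fin n → ℝ) → ℂ) ≤ (n : ℝ) ^ 2 * Z := by
      rw [hZdef, ← integral_const_mul]
      have hP := continuous_cbeP (n := n) j
      refine integral_mono (Continuous.integrableOn_of_cube (by fun_prop))
        (Continuous.integrableOn_of_cube (by fun_prop)) fun θ => ?_
      have h2 := cbeWeight_nonneg β n θ
      have h3 := norm_cbeP_le j θ
      simp only
      gcongr
    refine h1.trans (mul_le_mul_of_nonneg_right ?_ hZ)
    calc (n : ℝ) ^ 2 ≤ (4 * (1 + β) / β * j) ^ 2 := by gcongr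
      _ = (4 * (1 + β) / β) ^ 2 * j ^ 2 := by ring
      _ ≤ _ := by gcongr; exact le_add_of_nonneg_right (by positivity)
  · obtain ⟨x, hx0, hx, hstep⟩ := exists_iterates (n := n) hβ hj
    have hN : cbeN β (x 0) = cbeN β (cbeP j : (Fin n → ℝ) → ℂ) := by
      rw [hx0]; simp [cbeN, cbePl]
    have h1 := hstep 0 (x 0) (hx 0).smooth
    have h2 := abs_correction_le hβ hn hj hx hstep
    rw [cbeI_mul_conj, hx0, cbeDir_self, ← hx0] at h1
    have h3 : cbeI β (fun θ => x (0 + 1) θ * (starRingEnd ℂ) (x 0 θ))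
        = ((j ^ 2 * n * Z - β / 2 * n * j * cbeN β (x 0) : ℝ) : ℂ) := by
      push_cast at h1 ⊢
      linear_combination -h1
    rw [zero_add] at h3
    rw [h3, Complex.norm_real, Real.norm_eq_abs] at h2
    have h4 := (abs_le.1 h2).1
    rw [hN] at h4
    have hA := cbeN_nonneg (β := β) (cbeP j : (Fin n → ℝ) → ℂ)
    set A := cbeN β (cbeP j : (Fin n → ℝ) → ℂ)
    have h5 : 4 * (1 + β) * j < β * n := by
      rw [div_mul_eq_mul_div, div_lt_iff₀ hβ] at h
      linarith
    have h6 : (1 + β) * j ^ 2 * A ≤ β / 4 * n * j * A := by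
      have : (1 + β) * (j : ℝ) ^ 2 ≤ β / 4 * n * j := by nlinarith
      gcongr
    have h7 : (n * j) * (β / 4 * A) ≤ (n * j) * (j * Z) := by nlinarith
    have h8 := le_of_mul_le_mul_left h7 (by positivity)
    have h9 : A ≤ 4 / β * (j * Z) := by
      rw [div_mul_eq_mul_div, le_div_iff₀ hβ]
      linarith
    refine h9.trans ?_
    have h10 : (j : ℝ) * Z ≤ j ^ 2 * Z := by
      gcongr
      nlinarith
    calc 4 / β * (j * Z) ≤ 4 / β * (j ^ 2 * Z) := by gcongr
      _ ≤ ((4 * (1 + β) / β) ^ 2 + 4 / β) * (j ^ 2 * Z) := by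
          gcongr; exact le_add_of_nonneg_left (by positivity)
      _ = _ := by ring

/-- A function dominated by `|p_j| / j` has bounded second moment. -/
lemma cbeExp_sq_le (hβ : 0 < β) (hn : 1 ≤ n) {j : ℕ} (hj : 1 ≤ j) {f : (Fin n → ℝ) → ℝ}
    (hfc : Continuous f) (hf : ∀ θ, |f θ| ≤ ‖cbeP j θ‖ / j) :
    cbeExp β n (fun θ => f θ ^ 2) ≤ (4 * (1 + β) / β) ^ 2 + 4 / β := by
  have hw := continuous_cbeWeight hβ n
  have hP := continuous_cbeP (n := n) j
  have hj' : (0 : ℝ) < j := by exact_mod_cast hj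
  unfold cbeExp
  refine div_le_of_le_mul₀ (integral_nonneg fun θ => cbeWeight_nonneg β n θ) (by positivity) ?_
  have h1 : ∫ θ in cbeCube n, f θ ^ 2 * cbeWeight β n θ
      ≤ ∫ θ in cbeCube n, (1 / (j : ℝ) ^ 2) * (‖cbeP j θ‖ ^ 2 * cbeWeight β n θ) := by
    refine integral_mono (Continuous.integrableOn_of_cube (by fun_prop))
      (Continuous.integrableOn_of_cube (by fun_prop)) fun θ => ?_
    have h2 := cbeWeight_nonneg β n θ
    have h3 : f θ ^ 2 ≤ (‖cbeP j θ‖ / j) ^ 2 := by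
      rw [← sq_abs]
      have := hf θ
      gcongr
    calc f θ ^ 2 * cbeWeight β n θ ≤ (‖cbeP j θ‖ / j) ^ 2 * cbeWeight β n θ := by gcongr
      _ = _ := by ring
  rw [integral_const_mul] at h1
  have h4 := cbeN_cbeP_le hβ hn hj
  refine h1.trans ?_
  rw [one_div, inv_mul_le_iff₀ (by positivity)]
  exact h4.trans (le_of_eq (by ring))

end moment

lemma cbeP_eq_cos_sin {n : ℕ} (j : ℕ) (θ : Fin n → ℝ) :
    (cbeP j θ).re = ∑ μ, Real.cos (j * θ μ) ∧ (cbeP j θ).im = ∑ μ, Real.sin (j * θ μ) := by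
  have h : ∀ μ, cbeZ μ θ ^ j = Complex.exp ((j * θ μ : ℝ) * Complex.I) := by
    intro μ
    rw [cbeZ, ← Complex.exp_nat_mul]
    congr 1
    push_cast
    ring
  simp only [cbeP, h, Complex.re_sum, Complex.im_sum, Complex.exp_ofReal_mul_I_re,
    Complex.exp_ofReal_mul_I_im, and_self]

/-- Uniform second moment bounds: there is `C = C(β, ε)` such that for all `n, j ≥ 1`,
`E_n^β[(∑_μ cos(jθ_μ)/j^{4+ε})²] ≤ C` and `E_n^β[(∑_μ sin(jθ_μ)/j^{4+ε})²] ≤ C`. -/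
theorem uniform_second_moment_bounds (β ε : ℝ) (hβ : 0 < β) (hε : 0 < ε) (hε1 : ε < 1) :
    ∃ C : ℝ, ∀ n : ℕ, 1 ≤ n → ∀ j : ℕ, 1 ≤ j →
      cbeExp β n (fun θ => (∑ μ, Real.cos (j * θ μ) / (j : ℝ) ^ ((4 : ℝ) + ε)) ^ 2) ≤ C ∧
      cbeExp β n (fun θ => (∑ μ, Real.sin (j * θ μ) / (j : ℝ) ^ ((4 : ℝ) + ε)) ^ 2) ≤ C := by
  refine ⟨(4 * (1 + β) / β) ^ 2 + 4 / β, fun n hn j hj => ?_⟩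
  have hj' : (1 : ℝ) ≤ j := by exact_mod_cast hj
  have hj0 : (0 : ℝ) < j := by linarith
  have hpow : (j : ℝ) ≤ (j : ℝ) ^ ((4 : ℝ) + ε) :=
    Real.self_le_rpow_of_one_le hj' (by linarith)
  have hpow0 : (0 : ℝ) < (j : ℝ) ^ ((4 : ℝ) + ε) := by positivity
  constructor
  · refine cbeExp_sq_le hβ hn hj (by fun_prop) fun θ => ?_
    rw [← Finset.sum_div, abs_div, abs_of_pos hpow0, ← (cbeP_eq_cos_sin j θ).1]
    exact div_le_div₀ (norm_nonneg _) (Complex.abs_re_le_norm _) hj0 hpow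
  · refine cbeExp_sq_le hβ hn hj (by fun_prop) fun θ => ?_
    rw [← Finset.sum_div, abs_div, abs_of_pos hpow0, ← (cbeP_eq_cos_sin j θ).2]
    exact div_le_div₀ (norm_nonneg _) (Complex.abs_im_le_norm _) hj0 hpow
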